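/- arXiv:2405.14509 — 2 statements merged into one kernel-verified Lean document; each statement's English description precedes it below -/
import Mathlib

section
/- For x > 0, the digamma function satisfies log(x) - ψ(x) = 1/(2x) + 2∫₀^∞ t / ((t² + x²)(exp(2πt) - 1)) dt, where ψ is the digamma function (derivative of log Γ). -/
open Real MeasureTheory

/-- The digamma function: derivative of `log ∘ Γ`. -/
noncomputable def digamma (x : ℝ) : ℝ := deriv (fun y : ℝ => Real.log (Real.Gamma y)) x

open Set Filter Topology

/-- The integrand in Binet's second formula. -/
noncomputable def binetKernel (a t : ℝ) : ℝ :=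
  t / ((t ^ 2 + a ^ 2) * (Real.exp (2 * Real.pi * t) - 1))

lemma exp_two_pi_mul_sub_one_pos {t : ℝ} (ht : 0 < t) : 0 < Real.exp (2 * Real.pi * t) - 1 :=
  sub_pos.2 (Real.one_lt_exp_iff.2 (by positivity))

lemma div_exp_two_pi_mul_sub_one_le {t : ℝ} (ht : 0 < t) :
    t / (Real.exp (2 * Real.pi * t) - 1) ≤ Real.exp (-Real.pi * t) := by
  rw [div_le_iff₀ (exp_two_pi_mul_sub_one_pos ht), mul_sub, ← Real.exp_add, mul_one]
  have h := Real.self_le_sinh_iff.2 (by positivity : 0 ≤ Real.pi * t)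
  rw [Real.sinh_eq] at h
  have h3 : t * 3 ≤ t * Real.pi := by gcongr; exact Real.pi_gt_three.le
  ring_nf at h ⊢
  linarith

lemma binetKernel_nonneg (a : ℝ) {t : ℝ} (ht : 0 < t) : 0 ≤ binetKernel a t := by
  have := exp_two_pi_mul_sub_one_pos ht
  unfold binetKernel
  positivity

lemma binetKernel_le {a t : ℝ} (ha : 0 < a) (ht : 0 < t) :
    binetKernel a t ≤ (a ^ 2)⁻¹ * Real.exp (-Real.pi * t) := by
  have h := exp_two_pi_mul_sub_one_pos ht
  calc binetKernel a t = (t ^ 2 + a ^ 2)⁻¹ * (t / (Real.exp (2 * Real.pi * t) - 1)) := by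
        unfold binetKernel; field_simp
    _ ≤ (a ^ 2)⁻¹ * Real.exp (-Real.pi * t) := by
        gcongr
        · nlinarith [sq_nonneg t]
        · exact div_exp_two_pi_mul_sub_one_le ht

lemma integrableOn_binetKernel {a : ℝ} (ha : 0 < a) : IntegrableOn (binetKernel a) (Ioi 0) := by
  refine ((exp_neg_integrableOn_Ioi 0 Real.pi_pos).const_mul (a ^ 2)⁻¹).mono'
    (Measurable.aestronglyMeasurable (by unfold binetKernel; fun_prop)) ?_
  filter_upwards [ae_restrict_mem measurableSet_Ioi] with t ht
  rw [Real.norm_of_nonneg (binetKernel_nonneg a ht)]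
  exact binetKernel_le ha ht

lemma tendsto_integral_binetKernel :
    Tendsto (fun a : ℝ => ∫ t in Ioi (0 : ℝ), binetKernel a t) atTop (𝓝 0) := by
  have hlim : Tendsto (fun a : ℝ => (a ^ 2)⁻¹ * ∫ t in Ioi (0 : ℝ), Real.exp (-Real.pi * t))
      atTop (𝓝 0) := by
    simpa using (tendsto_inv_atTop_zero.comp (tendsto_pow_atTop (two_ne_zero))).mul_const
      (∫ t in Ioi (0 : ℝ), Real.exp (-Real.pi * t))
  refine tendsto_of_tendsto_of_tendsto_of_le_of_le' tendsto_const_nhds hlim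
    (Eventually.of_forall fun a => setIntegral_nonneg measurableSet_Ioi
      fun t ht => binetKernel_nonneg a ht) ?_
  filter_upwards [eventually_gt_atTop 0] with a ha
  rw [← integral_const_mul]
  exact setIntegral_mono_on (integrableOn_binetKernel ha)
    ((exp_neg_integrableOn_Ioi 0 Real.pi_pos).const_mul _) measurableSet_Ioi
    fun t ht => binetKernel_le ha ht

lemma tendsto_arctan_div_atTop {a : ℝ} (ha : 0 < a) :
    Tendsto (fun t : ℝ => Real.arctan (t / a)) atTop (𝓝 (Real.pi / 2)) :=
  (tendsto_nhds_of_tendsto_nhdsWithin Real.tendsto_arctan_atTop).comp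
    (tendsto_id.atTop_div_const ha)

lemma hasDerivAt_arctan_div {a : ℝ} (ha : 0 < a) (t : ℝ) :
    HasDerivAt (fun t : ℝ => Real.arctan (t / a)) (a / (t ^ 2 + a ^ 2)) t := by
  refine ((hasDerivAt_id' t).div_const a).arctan.congr_deriv ?_
  have : 0 < a ^ 2 + t ^ 2 := by positivity
  field_simp
  ring

lemma integral_one_div_sq_add_sq {a : ℝ} (ha : 0 < a) :
    IntegrableOn (fun t : ℝ => 1 / (t ^ 2 + a ^ 2)) (Ioi 0) ∧
      ∫ t in Ioi (0 : ℝ), 1 / (t ^ 2 + a ^ 2) = Real.pi / (2 * a) := by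
  have hd : ∀ t ∈ Ici (0 : ℝ), HasDerivAt (fun t : ℝ => Real.arctan (t / a) / a)
      (1 / (t ^ 2 + a ^ 2)) t := fun t _ => by
    refine ((hasDerivAt_arctan_div ha t).div_const a).congr_deriv ?_
    field_simp
  have hp : ∀ t ∈ Ioi (0 : ℝ), 0 ≤ 1 / (t ^ 2 + a ^ 2) := fun t _ => by positivity
  have hl := (tendsto_arctan_div_atTop ha).div_const a
  refine ⟨integrableOn_Ioi_deriv_of_nonneg' hd hp hl, ?_⟩
  rw [integral_Ioi_of_hasDerivAt_of_nonneg' hd hp hl]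
  simp
  field_simp

lemma tendsto_div_sq_add_sq (a : ℝ) :
    Tendsto (fun t : ℝ => t / (t ^ 2 + a ^ 2)) atTop (𝓝 0) := by
  refine tendsto_of_tendsto_of_tendsto_of_le_of_le' tendsto_const_nhds tendsto_inv_atTop_zero
    ?_ ?_
  · filter_upwards [eventually_gt_atTop 0] with t ht
    positivity
  · filter_upwards [eventually_gt_atTop 0] with t ht
    rw [inv_eq_one_div, div_le_div_iff₀ (by positivity) ht]
    nlinarith [sq_nonneg a]

lemma integral_sq_div_sq_add_sq_mul_sq_add_sq {a b : ℝ} (ha : 0 < a) (hb : 0 < b) :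
    IntegrableOn (fun t : ℝ => t ^ 2 / ((t ^ 2 + a ^ 2) * (t ^ 2 + b ^ 2))) (Ioi 0) ∧
      ∫ t in Ioi (0 : ℝ), t ^ 2 / ((t ^ 2 + a ^ 2) * (t ^ 2 + b ^ 2)) =
        Real.pi / (2 * (a + b)) := by
  have hp : ∀ t ∈ Ioi (0 : ℝ), 0 ≤ t ^ 2 / ((t ^ 2 + a ^ 2) * (t ^ 2 + b ^ 2)) :=
    fun t _ => by positivity
  rcases eq_or_ne a b with rfl | hab
  · have hd : ∀ t ∈ Ici (0 : ℝ),
        HasDerivAt (fun t : ℝ => Real.arctan (t / a) / (2 * a) - t / (t ^ 2 + a ^ 2) / 2)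
          (t ^ 2 / ((t ^ 2 + a ^ 2) * (t ^ 2 + a ^ 2))) t := fun t _ => by
      have hne : t ^ 2 + a ^ 2 ≠ 0 := by positivity
      refine (((hasDerivAt_arctan_div ha t).div_const (2 * a)).sub
        (((hasDerivAt_id' t).div ((hasDerivAt_pow 2 t).add_const (a ^ 2)) hne).div_const
          2)).congr_deriv ?_
      field_simp
      ring
    have hl := ((tendsto_arctan_div_atTop ha).div_const (2 * a)).sub
      ((tendsto_div_sq_add_sq a).div_const 2)
    refine ⟨integrableOn_Ioi_deriv_of_nonneg' hd hp hl, ?_⟩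
    rw [integral_Ioi_of_hasDerivAt_of_nonneg' hd hp hl]
    simp
    field_simp
    ring
  · have hne : a ^ 2 - b ^ 2 ≠ 0 := by
      rw [sq_sub_sq]
      exact mul_ne_zero (by positivity) (sub_ne_zero.2 hab)
    have hd : ∀ t ∈ Ici (0 : ℝ),
        HasDerivAt (fun t : ℝ =>
          (a * Real.arctan (t / a) - b * Real.arctan (t / b)) / (a ^ 2 - b ^ 2))
          (t ^ 2 / ((t ^ 2 + a ^ 2) * (t ^ 2 + b ^ 2))) t := fun t _ => by
      refine ((((hasDerivAt_arctan_div ha t).const_mul a).sub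
        ((hasDerivAt_arctan_div hb t).const_mul b)).div_const (a ^ 2 - b ^ 2)).congr_deriv ?_
      have h1 : t ^ 2 + a ^ 2 ≠ 0 := by positivity
      have h2 : t ^ 2 + b ^ 2 ≠ 0 := by positivity
      field_simp
      ring
    have hl := (((tendsto_arctan_div_atTop ha).const_mul a).sub
        ((tendsto_arctan_div_atTop hb).const_mul b)).div_const (a ^ 2 - b ^ 2)
    refine ⟨integrableOn_Ioi_deriv_of_nonneg' hd hp hl, ?_⟩
    rw [integral_Ioi_of_hasDerivAt_of_nonneg' hd hp hl]
    have : a + b ≠ 0 := by positivity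
    simp
    field_simp
    ring

lemma integral_div_sq_add_sq_sub {a b : ℝ} (ha : 0 < a) (hab : a ≤ b) :
    IntegrableOn (fun t : ℝ => t / (t ^ 2 + a ^ 2) - t / (t ^ 2 + b ^ 2)) (Ioi 0) ∧
      ∫ t in Ioi (0 : ℝ), (t / (t ^ 2 + a ^ 2) - t / (t ^ 2 + b ^ 2)) =
        Real.log b - Real.log a := by
  have hb := ha.trans_le hab
  have hp : ∀ t ∈ Ioi (0 : ℝ), 0 ≤ t / (t ^ 2 + a ^ 2) - t / (t ^ 2 + b ^ 2) := fun t ht => by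
    have ht : 0 < t := ht
    rw [sub_nonneg]
    gcongr
  have hlog : ∀ c : ℝ, 0 < c → ∀ t : ℝ,
      HasDerivAt (fun t : ℝ => Real.log (t ^ 2 + c ^ 2) / 2) (t / (t ^ 2 + c ^ 2)) t :=
    fun c hc t => by
      have hne : t ^ 2 + c ^ 2 ≠ 0 := by positivity
      refine ((((hasDerivAt_pow 2 t).add_const (c ^ 2)).log hne).div_const 2).congr_deriv ?_
      field_simp
      simp [mul_comm]
  have hd : ∀ t ∈ Ici (0 : ℝ), HasDerivAt
      (fun t : ℝ => Real.log (t ^ 2 + a ^ 2) / 2 - Real.log (t ^ 2 + b ^ 2) / 2)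
      (t / (t ^ 2 + a ^ 2) - t / (t ^ 2 + b ^ 2)) t :=
    fun t _ => (hlog a ha t).sub (hlog b hb t)
  have hl : Tendsto (fun t : ℝ => Real.log (t ^ 2 + a ^ 2) / 2 - Real.log (t ^ 2 + b ^ 2) / 2)
      atTop (𝓝 0) := by
    have hq : Tendsto (fun t : ℝ => 1 + (a ^ 2 - b ^ 2) * (t ^ 2 + b ^ 2)⁻¹) atTop (𝓝 1) := by
      have : Tendsto (fun t : ℝ => (t ^ 2 + b ^ 2)⁻¹) atTop (𝓝 0) :=
        tendsto_inv_atTop_zero.comp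
          (tendsto_atTop_add_const_right _ _ (tendsto_pow_atTop two_ne_zero))
      simpa using (this.const_mul (a ^ 2 - b ^ 2)).const_add 1
    have h := ((Real.continuousAt_log one_ne_zero).tendsto.comp hq).div_const 2
    rw [Real.log_one, zero_div] at h
    refine h.congr fun t => ?_
    have h1 : t ^ 2 + a ^ 2 ≠ 0 := by positivity
    have h2 : t ^ 2 + b ^ 2 ≠ 0 := by positivity
    rw [← sub_div, ← Real.log_div h1 h2, Function.comp_apply]
    congr 2
    field_simp
    ring
  refine ⟨integrableOn_Ioi_deriv_of_nonneg' hd hp hl, ?_⟩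
  rw [integral_Ioi_of_hasDerivAt_of_nonneg' hd hp hl]
  simp [Real.log_pow]

lemma tsum_one_div_sq_add_sq {t : ℝ} (ht : 0 < t) :
    ∑' n : ℕ, 1 / (t ^ 2 + ((n : ℝ) + 1) ^ 2) =
      Real.pi / t * (1 / (Real.exp (2 * Real.pi * t) - 1) + 1 / 2 - 1 / (2 * Real.pi * t)) := by
  have hz : ((t : ℂ) * Complex.I) ∈ Complex.integerComplement :=
    UpperHalfPlane.coe_mem_integerComplement ⟨t * Complex.I, by simpa using ht⟩
  have h := cot_series_rep' hz
  have hE := exp_two_pi_mul_sub_one_pos ht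
  have hq : Complex.exp (2 * Real.pi * Complex.I * (t * Complex.I)) =
      ((Real.exp (2 * Real.pi * t))⁻¹ : ℝ) := by
    rw [← Real.exp_neg, Complex.ofReal_exp]
    congr 1
    push_cast
    linear_combination (2 * (Real.pi : ℂ) * t) * Complex.I_sq
  have hterm : ∀ n : ℕ, 1 / ((t : ℂ) * Complex.I - (n + 1)) + 1 / ((t : ℂ) * Complex.I + (n + 1)) =
      (-2 * t * Complex.I) * ((1 / (t ^ 2 + ((n : ℝ) + 1) ^ 2) : ℝ) : ℂ) := fun n => by
    have hn : (t : ℂ) ^ 2 + (n + 1) ^ 2 ≠ 0 := by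
      have : t ^ 2 + ((n : ℝ) + 1) ^ 2 ≠ 0 := by positivity
      exact_mod_cast this
    have hmul : ((t : ℂ) * Complex.I - (n + 1)) * ((t : ℂ) * Complex.I + (n + 1)) =
        -((t : ℂ) ^ 2 + (n + 1) ^ 2) := by
      linear_combination (t : ℂ) ^ 2 * Complex.I_sq
    have h12 := hmul.trans_ne (neg_ne_zero.2 hn)
    have h1 := left_ne_zero_of_mul h12
    have h2 := right_ne_zero_of_mul h12
    rw [div_add_div _ _ h1 h2, hmul]
    push_cast
    field_simp
    ring
  rw [Complex.cot_pi_eq_exp_ratio, hq, tsum_congr hterm, tsum_mul_left, ← Complex.ofReal_tsum] at h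
  generalize ∑' n : ℕ, 1 / (t ^ 2 + ((n : ℝ) + 1) ^ 2) = S at h ⊢
  have hreal : Real.pi * ((Real.exp (2 * Real.pi * t))⁻¹ + 1) /
      (1 - (Real.exp (2 * Real.pi * t))⁻¹) - 1 / t = 2 * t * S := by
    apply Complex.ofReal_injective
    push_cast
    have h' := congrArg (fun z => Complex.I * z) h
    simp only [div_eq_mul_inv, mul_inv, Complex.inv_I] at h' ⊢
    push_cast at h'
    linear_combination h' + (Real.pi * ((Complex.exp (2 * Real.pi * t))⁻¹ + 1) *
      (1 - (Complex.exp (2 * Real.pi * t))⁻¹)⁻¹ - 2 * t * S - (t : ℂ)⁻¹) * Complex.I_sq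
  have hEne := hE.ne'
  have hpos := Real.exp_pos (2 * Real.pi * t)
  generalize Real.exp (2 * Real.pi * t) = E at *
  have hS : S = (Real.pi * (E⁻¹ + 1) / (1 - E⁻¹) - 1 / t) / (2 * t) := by
    rw [hreal]; field_simp
  have hinv : 1 - E⁻¹ = (E - 1) / E := by field_simp
  rw [hS, hinv]
  field_simp
  ring

lemma hasSum_one_div_add_sub_one_div_add {x : ℝ} (hx : 0 < x) :
    HasSum (fun n : ℕ => 1 / (x + (n + 1)) - 1 / (x + 1 + (n + 1))) (1 / (x + 1)) := by
  rw [hasSum_iff_tendsto_nat_of_nonneg fun n => by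
    rw [sub_nonneg]; gcongr; linarith]
  have hsum : ∀ N : ℕ, ∑ n ∈ Finset.range N,
      (1 / (x + (n + 1)) - 1 / (x + 1 + (n + 1))) = 1 / (x + 1) - 1 / (x + (N + 1)) := fun N => by
    have := Finset.sum_range_sub' (fun n : ℕ => 1 / (x + (n + 1))) N
    simpa [add_assoc, add_comm, add_left_comm] using this
  simp_rw [hsum]
  have : Tendsto (fun N : ℕ => 1 / (x + ((N : ℝ) + 1))) atTop (𝓝 0) := by
    simp_rw [one_div]
    exact tendsto_inv_atTop_zero.comp (tendsto_atTop_add_const_left _ _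
      (tendsto_atTop_add_const_right _ _ tendsto_natCast_atTop_atTop))
  simpa using this.const_sub (1 / (x + 1))

lemma integral_binetKernel_sub_add_one {x : ℝ} (hx : 0 < x) :
    2 * ((∫ t in Ioi (0 : ℝ), binetKernel x t) - ∫ t in Ioi (0 : ℝ), binetKernel (x + 1) t) =
      (1 / x + 1 / (x + 1)) / 2 - (Real.log (x + 1) - Real.log x) := by
  have hx1 : 0 < x + 1 := by positivity
  let F : ℕ → ℝ → ℝ := fun n t =>
    t ^ 2 / ((t ^ 2 + x ^ 2) * (t ^ 2 + ((n : ℝ) + 1) ^ 2)) -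
      t ^ 2 / ((t ^ 2 + (x + 1) ^ 2) * (t ^ 2 + ((n : ℝ) + 1) ^ 2))
  have hFx (n : ℕ) := integral_sq_div_sq_add_sq_mul_sq_add_sq hx (b := (n : ℝ) + 1) (by positivity)
  have hFx1 (n : ℕ) :=
    integral_sq_div_sq_add_sq_mul_sq_add_sq hx1 (b := (n : ℝ) + 1) (by positivity)
  have hFint (n : ℕ) : IntegrableOn (F n) (Ioi 0) := (hFx n).1.sub (hFx1 n).1
  have hFval (n : ℕ) : ∫ t in Ioi (0 : ℝ), F n t =
      Real.pi / 2 * (1 / (x + (n + 1)) - 1 / (x + 1 + (n + 1))) := by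
    rw [integral_sub (hFx n).1 (hFx1 n).1, (hFx n).2, (hFx1 n).2]
    field_simp
  have hFnorm (n : ℕ) : ∫ t in Ioi (0 : ℝ), ‖F n t‖ = ∫ t in Ioi (0 : ℝ), F n t :=
    setIntegral_congr_fun measurableSet_Ioi fun t ht => by
      have ht : 0 < t := ht
      refine Real.norm_of_nonneg (sub_nonneg.2 ?_)
      gcongr
      linarith
  have hS := (hasSum_one_div_add_sub_one_div_add hx).mul_left (Real.pi / 2)
  have hsum := hasSum_integral_of_summable_integral_norm (μ := volume.restrict (Ioi 0)) hFint
    (by simp_rw [hFnorm, hFval]; exact hS.summable)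
  simp_rw [hFval] at hsum
  have hval := hsum.unique hS
  have hpt : ∀ t ∈ Ioi (0 : ℝ), ∑' n, F n t = Real.pi * (binetKernel x t - binetKernel (x + 1) t) +
      (Real.pi / 2 * (t / (t ^ 2 + x ^ 2) - t / (t ^ 2 + (x + 1) ^ 2)) -
        1 / 2 * (1 / (t ^ 2 + x ^ 2) - 1 / (t ^ 2 + (x + 1) ^ 2))) := fun t ht => by
    have ht : 0 < t := ht
    have hE := (exp_two_pi_mul_sub_one_pos ht).ne'
    have hF (n : ℕ) : F n t = (t ^ 2 / (t ^ 2 + x ^ 2) - t ^ 2 / (t ^ 2 + (x + 1) ^ 2)) *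
        (1 / (t ^ 2 + ((n : ℝ) + 1) ^ 2)) := by
      simp only [F]
      field_simp
    rw [tsum_congr hF, tsum_mul_left, tsum_one_div_sq_add_sq ht]
    unfold binetKernel
    generalize Real.exp (2 * Real.pi * t) - 1 = E at *
    field_simp
    ring
  have hD := integral_div_sq_add_sq_sub hx (le_add_of_nonneg_right zero_le_one : x ≤ x + 1)
  have hA := integral_one_div_sq_add_sq hx
  have hA1 := integral_one_div_sq_add_sq hx1
  have hK := integrableOn_binetKernel hx
  have hK1 := integrableOn_binetKernel hx1
  have hKint : IntegrableOn
      (fun t => Real.pi * (binetKernel x t - binetKernel (x + 1) t)) (Ioi 0) :=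
    (hK.sub hK1).const_mul _
  have hDint : IntegrableOn
      (fun t => Real.pi / 2 * (t / (t ^ 2 + x ^ 2) - t / (t ^ 2 + (x + 1) ^ 2))) (Ioi 0) :=
    hD.1.const_mul _
  have hAint : IntegrableOn
      (fun t => 1 / 2 * (1 / (t ^ 2 + x ^ 2) - 1 / (t ^ 2 + (x + 1) ^ 2))) (Ioi 0) :=
    (hA.1.sub hA1.1).const_mul _
  have hDAint : IntegrableOn
      (fun t => Real.pi / 2 * (t / (t ^ 2 + x ^ 2) - t / (t ^ 2 + (x + 1) ^ 2)) -
        1 / 2 * (1 / (t ^ 2 + x ^ 2) - 1 / (t ^ 2 + (x + 1) ^ 2))) (Ioi 0) := hDint.sub hAint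
  rw [setIntegral_congr_fun measurableSet_Ioi hpt, integral_add hKint hDAint,
    integral_sub hDint hAint, integral_const_mul, integral_const_mul, integral_const_mul,
    integral_sub hK hK1, hD.2, integral_sub hA.1 hA1.1, hA.2, hA1.2] at hval
  apply mul_left_cancel₀ Real.pi_ne_zero
  have e1 : Real.pi / (2 * x) = Real.pi / 2 * (1 / x) := by field_simp
  have e2 : Real.pi / (2 * (x + 1)) = Real.pi / 2 * (1 / (x + 1)) := by field_simp
  rw [e1, e2] at hval
  linear_combination 2 * hval

lemma log_Gamma_add_one {x : ℝ} (hx : 0 < x) :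
    Real.log (Real.Gamma (x + 1)) = Real.log (Real.Gamma x) + Real.log x := by
  rw [Real.Gamma_add_one hx.ne', Real.log_mul hx.ne' (Real.Gamma_pos_of_pos hx).ne', add_comm]

lemma differentiableAt_log_Gamma {x : ℝ} (hx : 0 < x) :
    DifferentiableAt ℝ (fun y : ℝ => Real.log (Real.Gamma y)) x :=
  (Real.differentiableAt_Gamma fun m => (by linarith [m.cast_nonneg (α := ℝ)] : -(m : ℝ) < x).ne').log
    (Real.Gamma_pos_of_pos hx).ne'

lemma digamma_add_one {x : ℝ} (hx : 0 < x) : digamma (x + 1) = digamma x + 1 / x := by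
  unfold digamma
  rw [← deriv_comp_add_const, one_div, ← Real.deriv_log,
    ← deriv_add (differentiableAt_log_Gamma hx) (Real.differentiableAt_log hx.ne')]
  apply EventuallyEq.deriv_eq
  filter_upwards [eventually_gt_nhds hx] with y hy using log_Gamma_add_one hy

lemma digamma_le_log {x : ℝ} (hx : 0 < x) : digamma x ≤ Real.log x := by
  have h := Real.convexOn_log_Gamma.deriv_le_slope (mem_Ioi.2 hx)
    (mem_Ioi.2 (by positivity : 0 < x + 1)) (by linarith) (differentiableAt_log_Gamma hx)
  rwa [slope_def_field, add_sub_cancel_left, div_one, Function.comp_apply, Function.comp_apply,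
    log_Gamma_add_one hx, add_sub_cancel_left] at h

lemma log_le_digamma_add_one {x : ℝ} (hx : 0 < x) : Real.log x ≤ digamma (x + 1) := by
  have hx1 : 0 < x + 1 := by positivity
  have h := Real.convexOn_log_Gamma.slope_le_deriv (mem_Ioi.2 hx) (mem_Ioi.2 hx1) (by linarith)
    (differentiableAt_log_Gamma hx1)
  rwa [slope_def_field, add_sub_cancel_left, div_one, Function.comp_apply, Function.comp_apply,
    log_Gamma_add_one hx, add_sub_cancel_left] at h

lemma tendsto_log_sub_digamma :
    Tendsto (fun x : ℝ => Real.log x - digamma x) atTop (𝓝 0) := by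
  refine tendsto_of_tendsto_of_tendsto_of_le_of_le' tendsto_const_nhds tendsto_inv_atTop_zero
    ?_ ?_
  · filter_upwards [eventually_gt_atTop 0] with x hx using sub_nonneg.2 (digamma_le_log hx)
  · filter_upwards [eventually_gt_atTop 0] with x hx
    have h := log_le_digamma_add_one hx
    rw [digamma_add_one hx, one_div] at h
    linarith

/-- Binet's second integral formula:
for `x > 0`, `log x - ψ(x) = 1/(2x) + 2∫₀^∞ t / ((t² + x²)(exp(2πt) - 1)) dt`. -/
theorem binet_second_integral (x : ℝ) (hx : 0 < x) :
    Real.log x - digamma x =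
      1 / (2 * x) +
        2 * ∫ t in Set.Ioi (0 : ℝ),
          t / ((t ^ 2 + x ^ 2) * (Real.exp (2 * Real.pi * t) - 1)) := by
  let G : ℝ → ℝ := fun y =>
    Real.log y - digamma y - (y⁻¹ / 2 + 2 * ∫ t in Ioi (0 : ℝ), binetKernel y t)
  have hG : Tendsto G atTop (𝓝 0) := by
    simpa using tendsto_log_sub_digamma.sub
      ((tendsto_inv_atTop_zero.div_const 2).add (tendsto_integral_binetKernel.const_mul 2))
  have hstep {y : ℝ} (hy : 0 < y) : G (y + 1) = G y := by
    have h := integral_binetKernel_sub_add_one hy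
    simp only [G, digamma_add_one hy]
    simp only [one_div] at h ⊢
    linear_combination h
  have hperiod (n : ℕ) : G (x + n) = G x := by
    induction n with
    | zero => simp
    | succ n ih => rw [Nat.cast_succ, ← add_assoc, hstep (by positivity), ih]
  have hlim : Tendsto (fun n : ℕ => G (x + n)) atTop (𝓝 0) :=
    hG.comp (tendsto_atTop_add_const_left _ _ tendsto_natCast_atTop_atTop)
  simp_rw [hperiod] at hlim
  have h0 : G x = 0 := tendsto_nhds_unique tendsto_const_nhds hlim
  have e : 1 / (2 * x) = x⁻¹ / 2 := by field_simp
  rw [e]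
  exact sub_eq_zero.1 h0
end

section
/- Let T₁ : (0,∞) → (0,∞) be twice differentiable with nonvanishing derivative, and define U(z) = [T₁''(T₁⁻¹(z))/T₁'(T₁⁻¹(z)) - T₁'(T₁⁻¹(z))/z] · T₁⁻¹(z). Then U(z) = -1 for all z > 0 if and only if T₁ satisfies the differential equation d²/dx² log(T₁(x)) + (1/x) d/dx log(T₁(x)) = 0; in particular, T₁(x) = C x^{-s} for constants C > 0, s ≠ 0 are solutions. -/
open Real

theorem deriv_log_comp_eqOn {f : ℝ → ℝ} (hf : ContDiffOn ℝ 2 f (Set.Ioi 0))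
    (hpos : ∀ x : ℝ, 0 < x → 0 < f x) :
    Set.EqOn (deriv fun t => Real.log (f t)) (fun t => deriv f t / f t) (Set.Ioi 0) := by
  intro x hx
  have hfx : DifferentiableAt ℝ f x :=
    (hf.contDiffAt (Ioi_mem_nhds hx)).differentiableAt (by norm_num)
  exact deriv.log hfx (hpos x hx).ne'

theorem deriv_deriv_log_comp {f : ℝ → ℝ} (hf : ContDiffOn ℝ 2 f (Set.Ioi 0))
    (hpos : ∀ x : ℝ, 0 < x → 0 < f x) {x : ℝ} (hx : 0 < x) :
    deriv (deriv fun t => Real.log (f t)) x =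
      (deriv (deriv f) x * f x - deriv f x * deriv f x) / f x ^ 2 := by
  have hfx : DifferentiableAt ℝ f x :=
    (hf.contDiffAt (Ioi_mem_nhds hx)).differentiableAt (by norm_num)
  have hf' : DifferentiableAt ℝ (deriv f) x :=
    ((hf.deriv_of_isOpen (m := 1) isOpen_Ioi (by norm_num)).contDiffAt
      (Ioi_mem_nhds hx)).differentiableAt (by norm_num)
  rw [((deriv_log_comp_eqOn hf hpos).eventuallyEq_of_mem (Ioi_mem_nhds hx)).deriv_eq]
  exact deriv_fun_div hf' hfx (hpos x hx).ne'

/-- The logarithm `y` of a power function solves `y'' + y' / x = 0`. -/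
theorem deriv_deriv_log_const_mul_rpow_add {C : ℝ} (hC : 0 < C) (p : ℝ) {x : ℝ} (hx : 0 < x) :
    deriv (deriv fun t : ℝ => Real.log (C * t ^ p)) x +
      (1 / x) * deriv (fun t : ℝ => Real.log (C * t ^ p)) x = 0 := by
  have hlog : Set.EqOn (fun t : ℝ => Real.log (C * t ^ p))
      (fun t => Real.log C + p * Real.log t) (Set.Ioi 0) := by
    intro t ht
    have ht' : 0 < t := ht
    simp only [Real.log_mul hC.ne' (Real.rpow_pos_of_pos ht' p).ne', Real.log_rpow ht']
  have hderiv : Set.EqOn (deriv fun t : ℝ => Real.log (C * t ^ p))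
      (fun t => p * t⁻¹) (Set.Ioi 0) := by
    intro t ht
    have ht' : t ≠ 0 := ne_of_gt ht
    rw [(hlog.eventuallyEq_of_mem (Ioi_mem_nhds ht)).deriv_eq]
    exact (((Real.hasDerivAt_log ht').const_mul p).const_add _).deriv
  rw [(hderiv.eventuallyEq_of_mem (Ioi_mem_nhds hx)).deriv_eq, hderiv hx,
    ((hasDerivAt_inv hx.ne').const_mul p).deriv]
  field_simp
  ring

/-- `U(z) = -1` for all `z > 0` iff `log ∘ T₁` satisfies the ODE
`(log T₁)'' + (1/x)(log T₁)' = 0` on `(0,∞)`; in particular `T₁(x) = C x^{-s}`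
satisfies the ODE. -/
theorem U_eq_neg_one_iff_ODE (T₁ Tinv : ℝ → ℝ)
    (hdiff : ContDiffOn ℝ 2 T₁ (Set.Ioi 0))
    (hderiv : ∀ x : ℝ, 0 < x → deriv T₁ x ≠ 0)
    (hpos : ∀ x : ℝ, 0 < x → 0 < T₁ x)
    (hinv : ∀ x : ℝ, 0 < x → Tinv (T₁ x) = x)
    (hinv' : ∀ z : ℝ, 0 < z → 0 < Tinv z ∧ T₁ (Tinv z) = z) :
    ((∀ z : ℝ, 0 < z →
        (deriv (deriv T₁) (Tinv z) / deriv T₁ (Tinv z) -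
          deriv T₁ (Tinv z) / z) * Tinv z = -1) ↔
      (∀ x : ℝ, 0 < x →
        deriv (deriv (fun t : ℝ => Real.log (T₁ t))) x +
          (1 / x) * deriv (fun t : ℝ => Real.log (T₁ t)) x = 0)) ∧
    (∀ C s : ℝ, 0 < C → s ≠ 0 → ∀ x : ℝ, 0 < x →
      deriv (deriv (fun t : ℝ => Real.log (C * t ^ (-s)))) x +
        (1 / x) * deriv (fun t : ℝ => Real.log (C * t ^ (-s))) x = 0) := by
  have key : ∀ x : ℝ, 0 < x →
      ((deriv (deriv T₁) x / deriv T₁ x - deriv T₁ x / T₁ x) * x = -1 ↔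
        deriv (deriv (fun t : ℝ => Real.log (T₁ t))) x +
          (1 / x) * deriv (fun t : ℝ => Real.log (T₁ t)) x = 0) := by
    intro x hx
    have hT := (hpos x hx).ne'
    have hT' := hderiv x hx
    have hx' := hx.ne'
    rw [deriv_deriv_log_comp hdiff hpos hx, deriv_log_comp_eqOn hdiff hpos hx]
    have h : (deriv (deriv T₁) x * T₁ x - deriv T₁ x * deriv T₁ x) / T₁ x ^ 2 +
        (1 / x) * (deriv T₁ x / T₁ x) =
        ((deriv (deriv T₁) x / deriv T₁ x - deriv T₁ x / T₁ x) * x + 1) *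
          (deriv T₁ x / (T₁ x * x)) := by
      field_simp
    rw [h, mul_eq_zero_iff_right (div_ne_zero hT' (mul_ne_zero hT hx')), eq_neg_iff_add_eq_zero]
  refine ⟨⟨fun h x hx => (key x hx).1 ?_, fun h z hz => ?_⟩,
    fun C s hC _ x hx => deriv_deriv_log_const_mul_rpow_add hC (-s) hx⟩
  · simpa only [hinv x hx] using h (T₁ x) (hpos x hx)
  · obtain ⟨hx, hz'⟩ := hinv' z hz
    simpa only [hz'] using (key _ hx).2 (h _ hx)
end
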